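/- Let 𝐃 be a finite collection of pairwise disjoint tiles (disjoint as rectangles in the phase plane), and define S_𝐃 f(x) := ( Σ_{p ∈ 𝐃} |⟨f, φ_p⟩|² 1_{I_p}(x)/|I_p| )^{1/2}. Then there is an absolute constant C such that pointwise (S_𝐃 f)^♯(x) ≤ C M_2 f(x) for every f ∈ L²_loc, where g^♯(x) := sup_{dyadic J ∋ x} inf_{c ∈ ℝ} |J|^{−1} ∫_J |g(y) − c| dy is the dyadic sharp maximal function and M_2 f(x) := sup_{dyadic J ∋ x} ( |J|^{−1} ∫_J |f(y)|² dy )^{1/2}. -/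

import Mathlib

open MeasureTheory Set
open scoped ENNReal NNReal Classical

noncomputable section
namespace Paper

/-- The Walsh functions `W_k`, supported on `[0,1)`. -/
def walsh (k : ℕ) (x : ℝ) : ℝ :=
  if h : k = 0 then (if 0 ≤ x ∧ x < 1 then (1:ℝ) else 0)
  else walsh (k / 2) (2 * x) + (if k % 2 = 0 then (1:ℝ) else -1) * walsh (k / 2) (2 * x - 1)
termination_by k
decreasing_by all_goals exact Nat.div_lt_self (Nat.pos_of_ne_zero h) one_lt_two

/-- The dyadic interval `[2^j m, 2^j (m+1))`. -/
def dyadicI (j m : ℤ) : Set ℝ := Ico ((2:ℝ)^j * (m:ℝ)) ((2:ℝ)^j * ((m:ℝ)+1))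

/-- A weight: positive a.e. and locally integrable. -/
def IsWeight (w : ℝ → ℝ) : Prop :=
  (∀ᵐ x ∂(volume : Measure ℝ), 0 < w x) ∧ LocallyIntegrable w volume

/-- The measure `w(x) dx`. -/
def wMeasure (w : ℝ → ℝ) : Measure ℝ := volume.withDensity fun x => ENNReal.ofReal (w x)

/-- `[w]_{A_p} ≤ A` over dyadic intervals, for `1 < p`. -/
def ApBoundedBy (w : ℝ → ℝ) (p A : ℝ) : Prop :=
  ∀ j m : ℤ,
    ((2:ℝ)^(-j) * ∫ x in dyadicI j m, w x) *
      ((2:ℝ)^(-j) * ∫ x in dyadicI j m, w x ^ (-1/(p-1)))^(p-1) ≤ A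

/-- `[w]_{A_1} ≤ A` over dyadic intervals. -/
def A1BoundedBy (w : ℝ → ℝ) (A : ℝ) : Prop :=
  ∀ j m : ℤ,
    (2:ℝ)^(-j) * ∫ x in dyadicI j m, w x ≤ A * essInf w (volume.restrict (dyadicI j m))

/-- `w ∈ A_q` for `q ∈ [1,∞)`, covering also the case `q = 1`. -/
def MemAq (w : ℝ → ℝ) (q : ℝ) : Prop :=
  IsWeight w ∧ ((q = 1 ∧ ∃ A, A1BoundedBy w A) ∨ (1 < q ∧ ∃ A, ApBoundedBy w q A))

/-- `⟨f,g⟩ = ∫_0^1 f g`. -/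
def inner01 (f g : ℝ → ℝ) : ℝ := ∫ x in Ico (0:ℝ) 1, f x * g x

/-- Walsh--Fourier partial sums, `S_n f = 0` for `n < 0`. -/
def walshSum (f : ℝ → ℝ) (n : ℤ) (x : ℝ) : ℝ :=
  if n < 0 then 0
  else ∑ k ∈ Finset.range (n.toNat + 1), inner01 f (walsh k) * walsh k x

/-- Pointwise `r`-variation sup over all finite increasing integer sequences. -/
def varNormE (r : ℝ) (u : ℤ → ℝ) : ℝ≥0∞ :=
  ⨆ (M : ℕ) (N : Fin (M + 1) → ℤ) (_ : StrictMono N),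
    ENNReal.ofReal ((∑ j : Fin M, |u (N j.succ) - u (N j.castSucc)| ^ r) ^ (1 / r))

/-- A tile `[2^j m, 2^j (m+1)) × [2^{-j} n, 2^{-j}(n+1))`. -/
structure Tile where
  j : ℤ
  m : ℕ
  n : ℕ
deriving DecidableEq

namespace Tile
def timeI (p : Tile) : Set ℝ := Ico ((2:ℝ)^p.j * (p.m:ℝ)) ((2:ℝ)^p.j * ((p.m:ℝ)+1))
def freqI (p : Tile) : Set ℝ := Ico ((2:ℝ)^(-p.j) * (p.n:ℝ)) ((2:ℝ)^(-p.j) * ((p.n:ℝ)+1))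
def len (p : Tile) : ℝ := (2:ℝ)^p.j
def rect (p : Tile) : Set (ℝ × ℝ) := p.timeI ×ˢ p.freqI
/-- The order `p < q` on tiles: the tiles intersect and `I_p ⊆ I_q`. -/
def below (p q : Tile) : Prop := (p.rect ∩ q.rect).Nonempty ∧ p.timeI ⊆ q.timeI
/-- The Walsh packet of a tile. -/
def packet (p : Tile) (x : ℝ) : ℝ :=
  (2:ℝ) ^ (-(p.j:ℝ)/2) * walsh p.n ((2:ℝ)^(-p.j) * x - (p.m:ℝ))
end Tile

/-- A bitile `[2^j m, 2^j (m+1)) × [2^{1-j} n, 2^{1-j}(n+1))` (area 2). -/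
structure Bitile where
  j : ℤ
  m : ℕ
  n : ℕ
deriving DecidableEq

namespace Bitile
def timeI (P : Bitile) : Set ℝ := Ico ((2:ℝ)^P.j * (P.m:ℝ)) ((2:ℝ)^P.j * ((P.m:ℝ)+1))
def freqI (P : Bitile) : Set ℝ := Ico ((2:ℝ)^(1-P.j) * (P.n:ℝ)) ((2:ℝ)^(1-P.j) * ((P.n:ℝ)+1))
def len (P : Bitile) : ℝ := (2:ℝ)^P.j
def rect (P : Bitile) : Set (ℝ × ℝ) := P.timeI ×ˢ P.freqI
/-- The order `P < Q` on bitiles. -/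
def below (P Q : Bitile) : Prop := (P.rect ∩ Q.rect).Nonempty ∧ P.timeI ⊆ Q.timeI
/-- The lower tile `P_1`. -/
def lower (P : Bitile) : Tile := ⟨P.j, P.m, 2 * P.n⟩
/-- The upper tile `P_2`. -/
def upper (P : Bitile) : Tile := ⟨P.j, P.m, 2 * P.n + 1⟩
end Bitile

/-- A tree of bitiles with top `P_T`. -/
structure Tree where
  top : Bitile
  elems : Finset Bitile
  below_top : ∀ P ∈ elems, P.below top

/-- A tree is 2-overlapping if `P_2 < (P_T)_2` for all its members. -/
def Tree.TwoOverlapping (T : Tree) : Prop :=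
  ∀ P ∈ T.elems, (Bitile.upper P).below T.top.upper

/-- A tree is 1-overlapping if `P_1 < (P_T)_1` for all its members. -/
def Tree.OneOverlapping (T : Tree) : Prop :=
  ∀ P ∈ T.elems, (Bitile.lower P).below T.top.lower

/-- `⟨f, φ_p⟩`. -/
def pinner (f : ℝ → ℝ) (p : Tile) : ℝ := ∫ y, f y * p.packet y

/-- The tree square function `S_T f`. -/
def treeSq (f : ℝ → ℝ) (T : Tree) (x : ℝ) : ℝ :=
  Real.sqrt (∑ P ∈ T.elems,
    (pinner f P.lower)^2 * Set.indicator P.timeI (fun _ => (1:ℝ)) x / P.len)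

/-- The (weighted) size of a collection of bitiles: the least constant `C` with
`‖S_T f‖_{L²(w)} ≤ C w(I_T)^{1/2}` over all 2-overlapping trees in the collection,
realized as a supremum of ratios. -/
def size (w f : ℝ → ℝ) (Ps : Set Bitile) : ℝ≥0∞ :=
  ⨆ (T : Tree) (_ : (T.elems : Set Bitile) ⊆ Ps ∧ T.TwoOverlapping),
    eLpNorm (treeSq f T) 2 (wMeasure w) / (wMeasure w T.top.timeI) ^ (1/2 : ℝ)

/-- The coefficient `a_P(x)` built from linearizing data. -/
def coefP (M : ℝ → ℕ) (N : ℕ → ℝ → ℤ) (a : ℕ → ℝ → ℝ) (P : Bitile) (x : ℝ) : ℝ :=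
  ∑ j ∈ Finset.Icc 1 (M x),
    if ((N (j-1) x : ℝ)) ∉ P.freqI ∧ ((N j x : ℝ)) ∈ (Bitile.upper P).freqI then a j x else 0

/-- The (weighted) density of a collection of bitiles. -/
def density (w g : ℝ → ℝ) (r' : ℝ) (M : ℝ → ℕ) (N : ℕ → ℝ → ℤ) (a : ℕ → ℝ → ℝ)
    (Ps : Set Bitile) : ℝ≥0∞ :=
  ⨆ (P : Bitile) (_ : P ∈ Ps) (Q : Bitile) (_ : P.below Q),
    (ENNReal.ofReal (∫ x in Q.timeI,
        |g x| ^ r' * (∑ k ∈ Finset.Icc 1 (M x),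
          if ((N k x : ℝ)) ∈ Q.freqI then |a k x| ^ r' else 0) * w x)
      / wMeasure w Q.timeI) ^ (1/r')

/-- The bilinear form `B_Ps(f,g)`. -/
def bform (w f g : ℝ → ℝ) (M : ℝ → ℕ) (N : ℕ → ℝ → ℤ) (a : ℕ → ℝ → ℝ)
    (Ps : Finset Bitile) : ℝ :=
  ∑ P ∈ Ps, pinner f P.lower * ∫ x, P.lower.packet x * coefP M N a P x * g x * w x

/-- The linearized tree operator `C_T f`. -/
def treeOp (f : ℝ → ℝ) (M : ℝ → ℕ) (N : ℕ → ℝ → ℤ) (a : ℕ → ℝ → ℝ) (T : Tree) (x : ℝ) : ℝ :=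
  ∑ P ∈ T.elems, pinner f P.lower * P.lower.packet x * coefP M N a P x

/-- The Haar function of the dyadic interval `[2^j m, 2^j(m+1))`. -/
def haarFn (j m : ℤ) (x : ℝ) : ℝ :=
  if x ∈ Ico ((2:ℝ)^j * (m:ℝ)) ((2:ℝ)^j * ((m:ℝ) + 1/2)) then (2:ℝ) ^ (-(j:ℝ)/2)
  else if x ∈ Ico ((2:ℝ)^j * ((m:ℝ) + 1/2)) ((2:ℝ)^j * ((m:ℝ)+1)) then -(2:ℝ) ^ (-(j:ℝ)/2)
  else 0

/-- The martingale difference projection `Δ_j f` onto Haar functions at scale `2^{1-j}`. -/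
def haarProj (j : ℤ) (f : ℝ → ℝ) (x : ℝ) : ℝ :=
  ∑' m : ℤ, (∫ y, f y * haarFn (1-j) m y) * haarFn (1-j) m x

/-- The pointwise `r`-variation of the Haar martingale of `f`. -/
def varHaar (r : ℝ) (f : ℝ → ℝ) (x : ℝ) : ℝ≥0∞ :=
  ⨆ (M : ℕ) (N : Fin (M + 1) → ℤ) (_ : StrictMono N),
    ENNReal.ofReal ((∑ k : Fin M,
      |∑ j ∈ Finset.Ioc (N k.castSucc) (N k.succ), haarProj j f x| ^ r) ^ (1/r))

/-- The jump counting function `M_λ(x)`. -/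
def jumpCount (f : ℝ → ℝ) (lam : ℝ) (x : ℝ) : ℝ≥0∞ :=
  ⨆ (M : ℕ) (N : Fin (M + 1) → ℤ) (_ : StrictMono N),
    ((Finset.univ.filter (fun k : Fin M =>
      lam < |∑ j ∈ Finset.Ioc (N k.castSucc) (N k.succ), haarProj j f x|)).card : ℝ≥0∞)

/-- The square function of a finite collection of tiles. -/
def tileSq (f : ℝ → ℝ) (Ds : Finset Tile) (x : ℝ) : ℝ :=
  Real.sqrt (∑ p ∈ Ds, (pinner f p)^2 * Set.indicator p.timeI (fun _ => (1:ℝ)) x / p.len)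

/-- The dyadic sharp maximal function. -/
def sharpMax (g : ℝ → ℝ) (x : ℝ) : ℝ≥0∞ :=
  ⨆ (j : ℤ) (m : ℤ) (_ : x ∈ dyadicI j m),
    ⨅ c : ℝ, ENNReal.ofReal ((2:ℝ)^(-j) * ∫ y in dyadicI j m, |g y - c|)

/-- The dyadic `L²` maximal function `M_2`. -/
def M2fn (f : ℝ → ℝ) (x : ℝ) : ℝ≥0∞ :=
  ⨆ (j : ℤ) (m : ℤ) (_ : x ∈ dyadicI j m),
    ENNReal.ofReal (((2:ℝ)^(-j) * ∫ y in dyadicI j m, (f y)^2) ^ (1/2:ℝ))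

/-- The weak `L^{1,∞}(μ)` quasinorm. -/
def wkNorm (g : ℝ → ℝ) (μ : Measure ℝ) : ℝ≥0∞ :=
  ⨆ lam : ℝ, ENNReal.ofReal lam * μ {x | lam < |g x|}

section Walsh

/-- The sign relating the two halves of the Walsh function `W_n`. -/
def walshSign (n : ℕ) : ℝ := if n % 2 = 0 then 1 else -1

lemma walshSign_mul_self (n : ℕ) : walshSign n * walshSign n = 1 := by
  unfold walshSign; split_ifs <;> norm_num

lemma walsh_zero (x : ℝ) : walsh 0 x = if 0 ≤ x ∧ x < 1 then (1:ℝ) else 0 := by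
  rw [walsh]; simp

lemma walsh_rec (n : ℕ) (x : ℝ) :
    walsh n x = walsh (n / 2) (2 * x) + walshSign n * walsh (n / 2) (2 * x - 1) := by
  by_cases hn : n = 0
  · subst hn
    simp only [Nat.zero_div, walsh_zero, walshSign]
    split_ifs <;> grind
  · rw [walsh, dif_neg hn, walshSign]

lemma walsh_eq_zero (n : ℕ) : ∀ {x : ℝ}, ¬ (0 ≤ x ∧ x < 1) → walsh n x = 0 := by
  induction n using Nat.strong_induction_on with
  | _ n ih =>
    intro x hx
    by_cases hn : n = 0
    · subst hn; rw [walsh_zero, if_neg hx]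
    · have hlt : n / 2 < n := by omega
      rw [walsh_rec, ih _ hlt (by grind), ih _ hlt (by grind)]
      simp

lemma walsh_mul_rec (m n : ℕ) (x : ℝ) :
    walsh m x * walsh n x = walsh (m / 2) (2 * x) * walsh (n / 2) (2 * x)
      + walshSign m * walshSign n * (walsh (m / 2) (2 * x - 1) * walsh (n / 2) (2 * x - 1)) := by
  rw [walsh_rec m, walsh_rec n]
  by_cases hx : 0 ≤ 2 * x ∧ 2 * x < 1
  · have h : ¬ (0 ≤ 2 * x - 1 ∧ 2 * x - 1 < 1) := by grind
    simp [walsh_eq_zero _ h]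
  · simp only [walsh_eq_zero _ hx]
    ring

lemma measurable_walsh (n : ℕ) : Measurable (walsh n) := by
  induction n using Nat.strong_induction_on with
  | _ n ih =>
    by_cases hn : n = 0
    · subst hn
      have : walsh 0 = (Ico (0:ℝ) 1).indicator 1 := by
        ext x
        simp [walsh_zero, indicator_apply, mem_Ico]
      rw [this]
      exact measurable_one.indicator measurableSet_Ico
    · have h := ih (n / 2) (by omega)
      have : walsh n = fun x =>
          walsh (n / 2) (2 * x) + walshSign n * walsh (n / 2) (2 * x - 1) :=
        funext (walsh_rec n)
      rw [this]
      exact (h.comp (by fun_prop)).add ((h.comp (by fun_prop)).const_mul _)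

lemma walsh_mul_self (n : ℕ) : ∀ x : ℝ, walsh n x * walsh n x = walsh 0 x := by
  induction n using Nat.strong_induction_on with
  | _ n ih =>
    intro x
    by_cases hn : n = 0
    · subst hn; simp only [walsh_zero]; split_ifs <;> simp
    · rw [walsh_mul_rec, ih _ (by omega), ih _ (by omega), walshSign_mul_self, walsh_rec 0 x]
      simp [walshSign]

lemma abs_walsh_le (n : ℕ) (x : ℝ) : |walsh n x| ≤ 1 := by
  rw [← sq_le_one_iff_abs_le_one, sq, walsh_mul_self, walsh_zero]
  split_ifs <;> norm_num

lemma integral_walsh_zero : ∫ x, walsh 0 x = 1 := by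
  have : walsh 0 = (Ico (0:ℝ) 1).indicator 1 := by
    ext x
    simp [walsh_zero, indicator_apply, mem_Ico]
  rw [this, integral_indicator_one measurableSet_Ico]
  simp

lemma integrable_walsh_mul (m n : ℕ) : Integrable fun x => walsh m x * walsh n x := by
  have h : IntegrableOn (fun x => walsh m x * walsh n x) (Ico 0 1) := by
    refine Measure.integrableOn_of_bounded (M := 1) (by simp)
      ((measurable_walsh m).mul (measurable_walsh n)).aestronglyMeasurable ?_
    filter_upwards with x
    rw [Real.norm_eq_abs, abs_mul]
    exact mul_le_one₀ (abs_walsh_le m x) (abs_nonneg _) (abs_walsh_le n x)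
  refine (integrableOn_iff_integrable_of_support_subset fun x hx => ?_).1 h
  by_contra hc
  exact hx (by simp [walsh_eq_zero m (show ¬ (0 ≤ x ∧ x < 1) from hc)])

lemma integral_comp_affine (g : ℝ → ℝ) (a b : ℝ) :
    ∫ x, g (a * x - b) = |a⁻¹| * ∫ x, g x := by
  rw [Measure.integral_comp_mul_left (fun x => g (x - b)) a, integral_sub_right_eq_self g b,
    smul_eq_mul]

lemma integral_walsh_mul_rec (m n : ℕ) :
    ∫ x, walsh m x * walsh n x =
      (1 + walshSign m * walshSign n) / 2 * ∫ x, walsh (m / 2) x * walsh (n / 2) x := by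
  have hi := integrable_walsh_mul (m / 2) (n / 2)
  have h1 : Integrable fun x => walsh (m / 2) (2 * x) * walsh (n / 2) (2 * x) :=
    hi.comp_mul_left' two_ne_zero
  have h2 : Integrable fun x => walsh (m / 2) (2 * x - 1) * walsh (n / 2) (2 * x - 1) :=
    (hi.comp_sub_right 1).comp_mul_left' two_ne_zero
  simp_rw [walsh_mul_rec m n]
  rw [integral_add h1 (h2.const_mul _), integral_const_mul,
    integral_comp_affine (fun x => walsh (m / 2) x * walsh (n / 2) x) 2 1]
  have := integral_comp_affine (fun x => walsh (m / 2) x * walsh (n / 2) x) 2 0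
  simp only [sub_zero] at this
  rw [this, abs_of_pos (by norm_num)]
  ring

lemma integral_walsh_mul_of_ne {m n : ℕ} (h : m ≠ n) : ∫ x, walsh m x * walsh n x = 0 := by
  induction hs : m + n using Nat.strong_induction_on generalizing m n with
  | _ s ih =>
    rw [integral_walsh_mul_rec]
    by_cases hp : m % 2 = n % 2
    · rw [ih (m / 2 + n / 2) (by omega) (by omega) rfl, mul_zero]
    · have : walshSign m * walshSign n = -1 := by
        unfold walshSign
        split_ifs <;> first | omega | norm_num
      rw [this]
      norm_num

/-- On a dyadic subinterval of `[0,1)` of length `2^{-k}`, the Walsh function `W_n` is a multiple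
of the rescaled Walsh function `W_{⌊n/2^k⌋}`. -/
lemma exists_walsh_restrict (k : ℕ) : ∀ n r : ℕ, r < 2 ^ k → ∃ ε : ℝ, ∀ y : ℝ, 0 ≤ y → y < 1 →
    walsh n ((y + r) / 2 ^ k) = ε * walsh (n / 2 ^ k) y := by
  induction k with
  | zero =>
    intro n r hr
    refine ⟨1, fun y _ _ => ?_⟩
    have : r = 0 := by simpa using hr
    simp [this]
  | succ k ih =>
    intro n r hr
    have hdiv : n / 2 ^ (k + 1) = n / 2 / 2 ^ k := by
      rw [Nat.div_div_eq_div_mul, pow_succ']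
    have hpos : (0:ℝ) < 2 ^ k := by positivity
    by_cases hrk : r < 2 ^ k
    · obtain ⟨ε, hε⟩ := ih (n / 2) r hrk
      refine ⟨ε, fun y h0 h1 => ?_⟩
      have e : 2 * ((y + r) / 2 ^ (k + 1)) = (y + r) / 2 ^ k := by
        rw [pow_succ]; field_simp
      have hr' : (r:ℝ) + 1 ≤ 2 ^ k := by exact_mod_cast hrk
      have hlt : (y + r) / 2 ^ k < 1 := by rw [div_lt_one hpos]; linarith
      rw [walsh_rec, e, hε y h0 h1, hdiv, walsh_eq_zero (x := (y + r) / 2 ^ k - 1)]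
      · ring
      · intro h; linarith [h.1]
    · obtain ⟨s, rfl⟩ := Nat.exists_eq_add_of_le (not_lt.1 hrk)
      obtain ⟨ε, hε⟩ := ih (n / 2) s (by rw [pow_succ] at hr; omega)
      refine ⟨walshSign n * ε, fun y h0 h1 => ?_⟩
      have e : 2 * ((y + (2 ^ k + s : ℕ)) / 2 ^ (k + 1)) = (y + s) / 2 ^ k + 1 := by
        push_cast; rw [pow_succ]; field_simp; ring
      have hge : 0 ≤ (y + s) / 2 ^ k := by positivity
      rw [walsh_rec, e, add_sub_cancel_right, hε y h0 h1, hdiv,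
        walsh_eq_zero (x := (y + s) / 2 ^ k + 1)]
      · ring
      · intro h; linarith [h.2]

end Walsh

section Dyadic

lemma mem_dyadicI_iff {j m : ℤ} {x : ℝ} : x ∈ dyadicI j m ↔ ⌊(2:ℝ) ^ (-j) * x⌋ = m := by
  have h : (0:ℝ) < 2 ^ j := by positivity
  rw [Int.floor_eq_iff, dyadicI, mem_Ico, zpow_neg, inv_mul_eq_div, le_div_iff₀ h, div_lt_iff₀ h,
    mul_comm _ (m:ℝ), mul_comm _ ((m:ℝ) + 1)]

lemma floor_dyadic_eq (j : ℤ) (k : ℕ) (x : ℝ) :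
    ⌊(2:ℝ) ^ (-(j + k)) * x⌋ = ⌊(2:ℝ) ^ (-j) * x⌋ / 2 ^ k := by
  have : (2:ℝ) ^ (-(j + k)) * x = (2:ℝ) ^ (-j) * x / ((2 ^ k : ℕ) : ℝ) := by
    rw [neg_add, zpow_add₀ two_ne_zero, zpow_neg 2 (k:ℤ), zpow_natCast]
    push_cast
    field_simp
  rw [this, Int.floor_div_natCast]
  push_cast
  rfl

lemma dyadicI_subset_of_mem {j j' m m' : ℤ} (hj : j ≤ j') {x : ℝ} (hx : x ∈ dyadicI j m)
    (hx' : x ∈ dyadicI j' m') : dyadicI j m ⊆ dyadicI j' m' := by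
  obtain ⟨k, rfl⟩ := Int.le.dest hj
  intro y hy
  rw [mem_dyadicI_iff] at *
  rw [floor_dyadic_eq] at *
  rw [hy, ← hx, hx']

lemma volume_real_dyadicI (j m : ℤ) : volume.real (dyadicI j m) = 2 ^ j := by
  have h : (0:ℝ) < 2 ^ j := by positivity
  rw [dyadicI, Real.volume_real_Ico_of_le (by nlinarith)]
  ring

lemma measurableSet_dyadicI (j m : ℤ) : MeasurableSet (dyadicI j m) := measurableSet_Ico

lemma volume_dyadicI_ne_top (j m : ℤ) : volume (dyadicI j m) ≠ ∞ := by
  simp [dyadicI]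

namespace Tile

lemma timeI_eq (p : Tile) : p.timeI = dyadicI p.j p.m := by
  simp [timeI, dyadicI]

lemma mem_timeI_iff (p : Tile) (x : ℝ) :
    x ∈ p.timeI ↔ 0 ≤ (2:ℝ) ^ (-p.j) * x - p.m ∧ (2:ℝ) ^ (-p.j) * x - p.m < 1 := by
  rw [timeI_eq, mem_dyadicI_iff, Int.floor_eq_iff]
  push_cast
  constructor <;> rintro ⟨h, h'⟩ <;> constructor <;> linarith

lemma packet_eq_zero (p : Tile) {x : ℝ} (hx : x ∉ p.timeI) : p.packet x = 0 := by
  rw [mem_timeI_iff] at hx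
  rw [packet, walsh_eq_zero _ hx, mul_zero]

lemma measurable_packet (p : Tile) : Measurable p.packet :=
  ((measurable_walsh p.n).comp (by fun_prop)).const_mul _

lemma abs_packet_le (p : Tile) (x : ℝ) : |p.packet x| ≤ (2:ℝ) ^ (-(p.j:ℝ) / 2) := by
  have h : (0:ℝ) < (2:ℝ) ^ (-(p.j:ℝ) / 2) := by positivity
  rw [packet, abs_mul, abs_of_pos h]
  exact mul_le_of_le_one_right h.le (abs_walsh_le _ _)

lemma integral_packet_mul_self (p : Tile) : ∫ x, p.packet x * p.packet x = 1 := by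
  have h : ∀ x, p.packet x * p.packet x = (2:ℝ) ^ (-p.j) * walsh 0 ((2:ℝ) ^ (-p.j) * x - p.m) := by
    intro x
    have e : (2:ℝ) ^ (-(p.j:ℝ) / 2) * (2:ℝ) ^ (-(p.j:ℝ) / 2) = (2:ℝ) ^ (-p.j) := by
      rw [← Real.rpow_add two_pos, ← Real.rpow_intCast]
      congr 1
      push_cast
      ring
    rw [packet, mul_mul_mul_comm, e, walsh_mul_self]
  simp_rw [h]
  rw [integral_const_mul, integral_comp_affine, integral_walsh_zero, mul_one,
    abs_of_pos (by positivity)]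
  exact mul_inv_cancel₀ (by positivity)

lemma freqI_subset {p q : Tile} {k : ℕ} (hj : p.j + k = q.j) (hn : p.n = q.n / 2 ^ k) :
    q.freqI ⊆ p.freqI := by
  have h : (2:ℝ) ^ (-p.j) = (2:ℝ) ^ (-q.j) * 2 ^ k := by
    rw [← zpow_natCast, ← zpow_add₀ two_ne_zero]; congr 1; omega
  have h1 : p.n * 2 ^ k ≤ q.n := hn ▸ Nat.div_mul_le_self _ _
  have h2 : q.n + 1 ≤ (p.n + 1) * 2 ^ k := by
    have := Nat.lt_mul_div_succ q.n (show 0 < 2 ^ k by positivity)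
    rw [← hn] at this
    linarith
  have h1' : (p.n:ℝ) * 2 ^ k ≤ q.n := by exact_mod_cast h1
  have h2' : (q.n:ℝ) + 1 ≤ ((p.n:ℝ) + 1) * 2 ^ k := by exact_mod_cast h2
  refine Ico_subset_Ico ?_ ?_ <;> rw [h, mul_assoc] <;> gcongr <;> linarith

lemma integral_packet_mul_of_le {p q : Tile} (hj : p.j ≤ q.j) (h : p.rect ∩ q.rect = ∅) :
    ∫ x, p.packet x * q.packet x = 0 := by
  obtain ⟨k, hk⟩ := Int.le.dest hj
  by_cases hdisj : p.timeI ∩ q.timeI = ∅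
  · have : ∀ x, p.packet x * q.packet x = 0 := by
      intro x
      by_cases hx : x ∈ p.timeI
      · rw [packet_eq_zero q fun hq => (hdisj ▸ ⟨hx, hq⟩ : x ∈ (∅ : Set ℝ)), mul_zero]
      · rw [packet_eq_zero p hx, zero_mul]
    simp [this]
  obtain ⟨z, hzp, hzq⟩ := nonempty_iff_ne_empty.2 hdisj
  have hn : p.n ≠ q.n / 2 ^ k := by
    intro hn
    have hne : (2:ℝ) ^ (-q.j) * q.n ∈ q.freqI := by
      refine ⟨le_rfl, ?_⟩
      have : (0:ℝ) < 2 ^ (-q.j) := by positivity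
      nlinarith
    have : (z, (2:ℝ) ^ (-q.j) * q.n) ∈ p.rect ∩ q.rect :=
      ⟨⟨hzp, freqI_subset hk hn hne⟩, hzq, hne⟩
    rw [h] at this
    exact this
  have hm : q.m = p.m / 2 ^ k := by
    rw [timeI_eq, mem_dyadicI_iff] at hzp hzq
    rw [← hk, floor_dyadic_eq, hzp] at hzq
    exact_mod_cast hzq.symm
  obtain ⟨ε, hε⟩ := exists_walsh_restrict k q.n (p.m % 2 ^ k) (Nat.mod_lt _ (by positivity))
  have hmul : ∀ x, p.packet x * q.packet x =
      ((2:ℝ) ^ (-(p.j:ℝ) / 2) * (2:ℝ) ^ (-(q.j:ℝ) / 2) * ε) *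
        (walsh p.n ((2:ℝ) ^ (-p.j) * x - p.m) *
          walsh (q.n / 2 ^ k) ((2:ℝ) ^ (-p.j) * x - p.m)) := by
    intro x
    by_cases hx : x ∈ p.timeI
    · have hx' := (mem_timeI_iff p x).1 hx
      have hq : (2:ℝ) ^ (-q.j) * x - q.m =
          ((2:ℝ) ^ (-p.j) * x - p.m + (p.m % 2 ^ k : ℕ)) / 2 ^ k := by
        have e : (2:ℝ) ^ (-p.j) = (2:ℝ) ^ (-q.j) * 2 ^ k := by
          rw [← zpow_natCast, ← zpow_add₀ two_ne_zero]; congr 1; omega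
        have e' : (p.m:ℝ) = 2 ^ k * q.m + (p.m % 2 ^ k : ℕ) := by
          rw [hm]
          exact_mod_cast (Nat.div_add_mod p.m (2 ^ k)).symm
        rw [e]
        field_simp
        linarith
      rw [packet, packet, hq, hε _ hx'.1 hx'.2]
      ring
    · rw [packet_eq_zero p hx, walsh_eq_zero p.n (mt (mem_timeI_iff p x).2 hx)]
      ring
  simp_rw [hmul]
  rw [integral_const_mul,
    integral_comp_affine (fun y => walsh p.n y * walsh (q.n / 2 ^ k) y),
    integral_walsh_mul_of_ne hn, mul_zero, mul_zero]

/-- Walsh packets of disjoint tiles are orthogonal. -/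
lemma integral_packet_mul_eq_zero {p q : Tile} (h : p.rect ∩ q.rect = ∅) :
    ∫ x, p.packet x * q.packet x = 0 := by
  rcases le_total p.j q.j with hj | hj
  · exact integral_packet_mul_of_le hj h
  · simp_rw [mul_comm (p.packet _)]
    exact integral_packet_mul_of_le hj (inter_comm _ _ ▸ h)

end Tile

end Dyadic

/-- Bessel's inequality for square integrable functions. -/
lemma sum_sq_integral_mul_le {α ι : Type*} [MeasurableSpace α] {μ : Measure α} {s : Finset ι}
    {f : α → ℝ} {e : ι → α → ℝ} (hf : MemLp f 2 μ) (he : ∀ i ∈ s, MemLp (e i) 2 μ)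
    (hone : ∀ i ∈ s, ∫ x, e i x * e i x ∂μ = 1)
    (hzero : ∀ i ∈ s, ∀ j ∈ s, i ≠ j → ∫ x, e i x * e j x ∂μ = 0) :
    ∑ i ∈ s, (∫ x, f x * e i x ∂μ) ^ 2 ≤ ∫ x, f x ^ 2 ∂μ := by
  have hinner : ∀ {u v : α → ℝ} (hu : MemLp u 2 μ) (hv : MemLp v 2 μ),
      inner ℝ (hu.toLp u) (hv.toLp v) = ∫ x, v x * u x ∂μ := by
    intro u v hu hv
    rw [L2.inner_def]
    refine integral_congr_ae ?_
    filter_upwards [hu.coeFn_toLp, hv.coeFn_toLp] with x h1 h2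
    simp [h1, h2]
  have hon : Orthonormal ℝ fun i : s => (he i i.2).toLp (e i) := by
    rw [orthonormal_iff_ite]
    intro i j
    rw [hinner]
    split_ifs with hij
    · subst hij; exact hone i i.2
    · exact hzero j j.2 i i.2 fun h => hij (Subtype.ext h.symm)
  have := hon.sum_inner_products_le (hf.toLp f) (s := Finset.univ)
  rw [← real_inner_self_eq_norm_sq, hinner] at this
  simp only [hinner, Real.norm_eq_abs, sq_abs, ← sq] at this
  rwa [Finset.sum_coe_sort s fun i => (∫ x, f x * e i x ∂μ) ^ 2] at this

lemma sum_pinner_sq_le {Ds : Finset Tile}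
    (hD : ∀ p ∈ Ds, ∀ p' ∈ Ds, p ≠ p' → p.rect ∩ p'.rect = ∅) {f : ℝ → ℝ} {J : Set ℝ}
    (hJf : volume J ≠ ∞) (hf : MemLp f 2 (volume.restrict J))
    (hsub : ∀ p ∈ Ds, p.timeI ⊆ J) :
    ∑ p ∈ Ds, pinner f p ^ 2 ≤ ∫ y in J, f y ^ 2 := by
  have : IsFiniteMeasure (volume.restrict J) := isFiniteMeasure_restrict.2 hJf
  have hset : ∀ p ∈ Ds, ∀ g : ℝ → ℝ, ∫ y in J, g y * p.packet y = ∫ y, g y * p.packet y := by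
    intro p hp g
    refine setIntegral_eq_integral_of_forall_compl_eq_zero fun y hy => ?_
    rw [p.packet_eq_zero fun h => hy (hsub p hp h), mul_zero]
  have hbessel := sum_sq_integral_mul_le (s := Ds) (e := Tile.packet) hf
    (fun p _ => MemLp.of_bound p.measurable_packet.aestronglyMeasurable _
      (Filter.Eventually.of_forall p.abs_packet_le))
    (fun p hp => by rw [hset p hp]; exact p.integral_packet_mul_self)
    (fun p hp q hq hpq => by
      rw [hset q hq]; exact Tile.integral_packet_mul_eq_zero (hD p hp q hq hpq))
  refine le_trans (le_of_eq ?_) hbessel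
  exact Finset.sum_congr rfl fun p hp => by rw [hset p hp, pinner]

/-- Jensen's inequality for the square on a set of finite measure. -/
lemma sq_setIntegral_le {α : Type*} [MeasurableSpace α] {μ : Measure α} [IsFiniteMeasure μ]
    {h : α → ℝ} (hh : MemLp h 2 μ) :
    (∫ x, h x ∂μ) ^ 2 ≤ μ.real univ * ∫ x, h x ^ 2 ∂μ := by
  have h1 : Integrable h μ := hh.integrable one_le_two
  have h2 := hh.integrable_sq
  set V := μ.real univ
  set I := ∫ x, h x ∂μ
  have hV : 0 ≤ V := measureReal_nonneg
  have key : 0 ≤ ∫ x, (V * h x - I) ^ 2 ∂μ := integral_nonneg fun x => sq_nonneg _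
  have : ∫ x, (V * h x - I) ^ 2 ∂μ = V * (V * (∫ x, h x ^ 2 ∂μ) - I ^ 2) := by
    have e : ∀ x, (V * h x - I) ^ 2 = V ^ 2 * h x ^ 2 - 2 * V * I * h x + I ^ 2 := by
      intro x; ring
    simp_rw [e]
    have hsub : Integrable (fun x => V ^ 2 * h x ^ 2 - 2 * V * I * h x) μ :=
      (h2.const_mul _).sub (h1.const_mul _)
    rw [integral_add hsub (integrable_const _),
      integral_sub (h2.const_mul _) (h1.const_mul _), integral_const_mul, integral_const_mul,
      integral_const, smul_eq_mul]
    ring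
  rw [this] at key
  rcases hV.eq_or_lt with h0 | h0
  · have hμ : μ = 0 := by
      rw [← Measure.measure_univ_eq_zero]
      exact (measureReal_eq_zero_iff).1 h0.symm
    simp [I, V, hμ]
  · linarith [nonneg_of_mul_nonneg_right key h0]

/-- On a dyadic interval `J`, the square function of a collection of tiles differs from a constant
by at most the square function of the tiles living over `J`. -/
lemma exists_sq_tileSq_sub_le (f : ℝ → ℝ) (Ds : Finset Tile) {j m : ℤ} {x : ℝ}
    (hx : x ∈ dyadicI j m) :
    ∃ c : ℝ, ∀ y ∈ dyadicI j m, (tileSq f Ds y - c) ^ 2 ≤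
      ∑ p ∈ Ds with p.timeI ⊆ dyadicI j m,
        (pinner f p)^2 * Set.indicator p.timeI (fun _ => (1:ℝ)) y / p.len := by
  set t : Tile → ℝ → ℝ :=
    fun p y => (pinner f p)^2 * Set.indicator p.timeI (fun _ => (1:ℝ)) y / p.len
  have ht : ∀ p y, 0 ≤ t p y := fun p y => by
    have : 0 < p.len := by unfold Tile.len; positivity
    have : 0 ≤ Set.indicator p.timeI (fun _ => (1:ℝ)) y := indicator_nonneg (by simp) _
    positivity
  refine ⟨√(∑ p ∈ Ds with ¬ p.timeI ⊆ dyadicI j m, t p x), fun y hy => ?_⟩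
  have hconst : ∑ p ∈ Ds with ¬ p.timeI ⊆ dyadicI j m, t p x =
      ∑ p ∈ Ds with ¬ p.timeI ⊆ dyadicI j m, t p y := by
    refine Finset.sum_congr rfl fun p hp => ?_
    have hp' := (Finset.mem_filter.1 hp).2
    have hmem : ∀ u ∈ dyadicI j m, u ∈ p.timeI → dyadicI j m ⊆ p.timeI := by
      intro u hu hup
      rw [p.timeI_eq] at *
      rcases le_total p.j j with h | h
      · exact absurd (dyadicI_subset_of_mem h hup hu) hp'
      · exact dyadicI_subset_of_mem h hu hup
    have : x ∈ p.timeI ↔ y ∈ p.timeI := ⟨fun h => hmem x hx h hy, fun h => hmem y hy h hx⟩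
    simp only [t, indicator_apply, this]
  have hsplit : tileSq f Ds y = √((∑ p ∈ Ds with p.timeI ⊆ dyadicI j m, t p y) +
      ∑ p ∈ Ds with ¬ p.timeI ⊆ dyadicI j m, t p y) := by
    rw [Finset.sum_filter_add_sum_filter_not]; rfl
  rw [hconst, hsplit]
  set a := ∑ p ∈ Ds with p.timeI ⊆ dyadicI j m, t p y
  set b := ∑ p ∈ Ds with ¬ p.timeI ⊆ dyadicI j m, t p y
  have ha : 0 ≤ a := Finset.sum_nonneg fun p _ => ht p y
  have hb : 0 ≤ b := Finset.sum_nonneg fun p _ => ht p y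
  have h1 := Real.sq_sqrt hb
  have h2 := Real.sq_sqrt (add_nonneg ha hb)
  have h3 : √b ≤ √(a + b) := Real.sqrt_le_sqrt (by linarith)
  nlinarith [Real.sqrt_nonneg b]

lemma integrable_tile_term (f : ℝ → ℝ) (p : Tile) :
    Integrable fun y => (pinner f p)^2 * Set.indicator p.timeI (fun _ => (1:ℝ)) y / p.len := by
  refine (Integrable.const_mul ?_ _).div_const _
  have hmeas : MeasurableSet p.timeI := measurableSet_Ico
  exact (integrableOn_const (by simp [Tile.timeI])).integrable_indicator hmeas

lemma integral_tile_term (f : ℝ → ℝ) {p : Tile} {J : Set ℝ} (hp : p.timeI ⊆ J) :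
    ∫ y in J, (pinner f p)^2 * Set.indicator p.timeI (fun _ => (1:ℝ)) y / p.len =
      pinner f p ^ 2 := by
  have hlen : p.len ≠ 0 := by unfold Tile.len; positivity
  have hmeas : MeasurableSet p.timeI := measurableSet_Ico
  rw [integral_div, integral_const_mul, setIntegral_indicator hmeas,
    inter_eq_self_of_subset_right hp, setIntegral_const, p.timeI_eq, volume_real_dyadicI]
  simp only [Tile.len, smul_eq_mul, mul_one] at *
  field_simp

lemma measurable_tileSq (f : ℝ → ℝ) (Ds : Finset Tile) : Measurable (tileSq f Ds) := by
  refine (Finset.measurable_sum _ fun p _ => ?_).sqrt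
  exact ((measurable_const.indicator (measurableSet_Ico : MeasurableSet p.timeI)).const_mul
    _).div_const _

lemma exists_average_tileSq_sub_le {Ds : Finset Tile}
    (hD : ∀ p ∈ Ds, ∀ p' ∈ Ds, p ≠ p' → p.rect ∩ p'.rect = ∅) {f : ℝ → ℝ} (hf : Measurable f)
    (hf2 : LocallyIntegrable (fun y => (f y)^2) volume) {x : ℝ} {j m : ℤ}
    (hx : x ∈ dyadicI j m) :
    ∃ c : ℝ, (2:ℝ)^(-j) * ∫ y in dyadicI j m, |tileSq f Ds y - c| ≤
      ((2:ℝ)^(-j) * ∫ y in dyadicI j m, (f y)^2) ^ (1/2:ℝ) := by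
  obtain ⟨c, hc⟩ := exists_sq_tileSq_sub_le f Ds hx
  refine ⟨c, ?_⟩
  have hJ := measurableSet_dyadicI j m
  have : IsFiniteMeasure (volume.restrict (dyadicI j m)) :=
    isFiniteMeasure_restrict.2 (volume_dyadicI_ne_top j m)
  have hfJ : MemLp f 2 (volume.restrict (dyadicI j m)) := by
    rw [memLp_two_iff_integrable_sq hf.aestronglyMeasurable]
    exact (hf2.integrableOn_isCompact isCompact_Icc).mono_set Ico_subset_Icc_self
  have hint : Integrable (fun y => ∑ p ∈ Ds with p.timeI ⊆ dyadicI j m,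
      (pinner f p)^2 * Set.indicator p.timeI (fun _ => (1:ℝ)) y / p.len)
      (volume.restrict (dyadicI j m)) :=
    integrable_finsetSum _ fun p _ => (integrable_tile_term f p).restrict
  have hmeas : Measurable fun y => |tileSq f Ds y - c| :=
    ((measurable_tileSq f Ds).sub_const c).abs
  have hle : ∀ᵐ y ∂volume.restrict (dyadicI j m), |tileSq f Ds y - c| ^ 2 ≤
      ∑ p ∈ Ds with p.timeI ⊆ dyadicI j m,
        (pinner f p)^2 * Set.indicator p.timeI (fun _ => (1:ℝ)) y / p.len := by
    filter_upwards [ae_restrict_mem hJ] with y hy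
    rw [sq_abs]
    exact hc y hy
  have hh : MemLp (fun y => |tileSq f Ds y - c|) 2 (volume.restrict (dyadicI j m)) := by
    rw [memLp_two_iff_integrable_sq hmeas.aestronglyMeasurable]
    refine hint.mono' (hmeas.pow_const 2).aestronglyMeasurable ?_
    filter_upwards [hle] with y hy
    rwa [Real.norm_of_nonneg (sq_nonneg _)]
  have hbound : ∫ y in dyadicI j m, |tileSq f Ds y - c| ^ 2 ≤ ∫ y in dyadicI j m, f y ^ 2 := by
    refine (integral_mono_ae hh.integrable_sq hint hle).trans ?_
    rw [integral_finsetSum _ fun p _ => (integrable_tile_term f p).restrict,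
      Finset.sum_congr rfl fun p hp => integral_tile_term f (Finset.mem_filter.1 hp).2]
    exact sum_pinner_sq_le
      (fun p hp q hq => hD p (Finset.mem_filter.1 hp).1 q (Finset.mem_filter.1 hq).1)
      (volume_dyadicI_ne_top j m) hfJ fun p hp => (Finset.mem_filter.1 hp).2
  have hjensen := sq_setIntegral_le hh
  rw [measureReal_restrict_apply_univ, volume_real_dyadicI] at hjensen
  rw [← Real.sqrt_eq_rpow]
  refine Real.le_sqrt_of_sq_le ?_
  have hpos : (0:ℝ) < 2 ^ (-j) := by positivity
  have hinv : (2:ℝ) ^ (-j) * 2 ^ j = 1 := by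
    rw [zpow_neg]; exact inv_mul_cancel₀ (by positivity)
  calc ((2:ℝ)^(-j) * ∫ y in dyadicI j m, |tileSq f Ds y - c|) ^ 2
      ≤ ((2:ℝ)^(-j)) ^ 2 * (2 ^ j * ∫ y in dyadicI j m, |tileSq f Ds y - c| ^ 2) := by
        rw [mul_pow]; gcongr
    _ = ((2:ℝ)^(-j) * 2 ^ j) * (2 ^ (-j) * ∫ y in dyadicI j m, |tileSq f Ds y - c| ^ 2) := by ring
    _ = (2:ℝ)^(-j) * ∫ y in dyadicI j m, |tileSq f Ds y - c| ^ 2 := by rw [hinv, one_mul]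
    _ ≤ _ := by gcongr

/-- sharp function bound, estimate (4.4): for a finite collection `Ds`
of pairwise disjoint tiles, `(S_Ds f)^♯ ≤ C M_2 f` pointwise, with an absolute constant. -/
theorem sharp_bound_disjoint_tiles :
    ∃ C : ℝ, 0 < C ∧
    ∀ Ds : Finset Tile, (∀ p ∈ Ds, ∀ p' ∈ Ds, p ≠ p' → p.rect ∩ p'.rect = ∅) →
    ∀ f : ℝ → ℝ, Measurable f → LocallyIntegrable (fun y => (f y)^2) volume →
    ∀ x : ℝ, sharpMax (tileSq f Ds) x ≤ ENNReal.ofReal C * M2fn f x := by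
  refine ⟨1, one_pos, fun Ds hD f hf hf2 x => ?_⟩
  rw [ENNReal.ofReal_one, one_mul]
  refine iSup_le fun j => iSup_le fun m => iSup_le fun hx => ?_
  obtain ⟨c, hc⟩ := exists_average_tileSq_sub_le hD hf hf2 hx
  refine (iInf_le _ c).trans ((ENNReal.ofReal_le_ofReal hc).trans ?_)
  exact le_iSup₂_of_le j m (le_iSup_of_le hx le_rfl)
end Paper
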